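/- Let k be a field of characteristic 0 with algebraic closure k̄, and let G be a finite group. Assume that every irreducible representation λ of G over k̄ can be realized over the subfield k(χ_λ) ⊆ k̄ generated over k by the values of its character χ_λ (this is the condition that every Schur index m_k(λ) equals 1). Then for every field extension L/k and every representation ρ : G → GL_n(L) with character χ, the representation ρ descends to the intermediate field k(χ) ⊆ L generated over k by the values of χ; in particular, ρ descends to a field algebraic over k, so ed(ρ) = 0. -/

import Mathlib

open Matrix

/-- The character of a matrix representation. -/
noncomputable def repChar {G L : Type*} [Group G] [Field L] {n : ℕ}
    (ρ : G →* GL (Fin n) L) (g : G) : L :=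
  Matrix.trace (ρ g : Matrix (Fin n) (Fin n) L)

/-- A matrix representation is irreducible (over the base field) if it is nonzero and the
only invariant subspaces are `⊥` and `⊤`. -/
def IsIrreducibleRep {K : Type*} [Field K] {G : Type*} [Group G] {n : ℕ}
    (ρ : G →* GL (Fin n) K) : Prop :=
  0 < n ∧ ∀ W : Submodule K (Fin n → K),
    (∀ g : G, ∀ v ∈ W, (ρ g : Matrix (Fin n) (Fin n) K).mulVec v ∈ W) → W = ⊥ ∨ W = ⊤

/-- A representation `ρ : G → GL_n(L)` descends to an intermediate field `K₀` of `L/k` if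
it is `L`-equivalent (conjugate) to the base change of some representation over `K₀`. -/
def Descends {k L : Type*} [Field k] [Field L] [Algebra k L] {G : Type*} [Group G] {n : ℕ}
    (ρ : G →* GL (Fin n) L) (K₀ : IntermediateField k L) : Prop :=
  ∃ ρ' : G →* GL (Fin n) K₀, ∃ M : GL (Fin n) L,
    ∀ g, ρ g = M * Units.map ((algebraMap K₀ L).mapMatrix).toMonoidHom (ρ' g) * M⁻¹

/-!
In characteristic zero a representation of a finite group is determined by its character, so
descending `ρ` to a field `K` means finding a representation over `K` with the same character `χ`.

Whether a character is irreducible over an algebraically closed field is decided by the value of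
`⟨χ, χ⟩`, so irreducibility survives every field embedding. Hence the regular representation over
`k̄` already exhibits all irreducible characters over any algebraically closed extension of `k`.
This makes the values of `χ` algebraic over `k` and lets one regard `χ` as a character over `k̄`.

Let `K = k(χ)` and let `φ` be an irreducible constituent of `χ`, with field of values `F = K(φ)`.
As `χ` is `K`-valued, all conjugates `σ ∘ φ` under the `K`-embeddings `σ : F → k̄` have the same
multiplicity in `χ`, and they are pairwise distinct because `F` is generated by the values of `φ`.
By the hypothesis on Schur indices, `φ` is afforded over `F`; restricting scalars from `F` to `K`
gives a representation over `K` whose character is `Tr_{F/K} ∘ φ`, the sum of these conjugates.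
Subtract it from `χ` and induct.
-/

namespace CharacterDescent

open Representation Module

section MatrixRepresentations

variable {K G : Type*} [Field K] [Group G] {n : ℕ}

/-- A matrix representation, viewed as a linear representation on column vectors. -/
noncomputable def toRepresentation (ρ : G →* GL (Fin n) K) : Representation K G (Fin n → K) :=
  (Matrix.toLinAlgEquiv' : _ ≃ₐ[K] _).toMonoidHom.comp ((Units.coeHom _).comp ρ)

lemma toRepresentation_apply (ρ : G →* GL (Fin n) K) (g : G) :
    toRepresentation ρ g = Matrix.toLin' (ρ g : Matrix (Fin n) (Fin n) K) :=
  rfl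

lemma character_toRepresentation (ρ : G →* GL (Fin n) K) :
    (toRepresentation ρ).character = repChar ρ :=
  funext fun g ↦ Matrix.trace_toLin'_eq (ρ g : Matrix (Fin n) (Fin n) K)

lemma exists_equiv_toRepresentation {V : Type*} [AddCommGroup V] [Module K V]
    [FiniteDimensional K V] (σ : Representation K G V) :
    ∃ ρ : G →* GL (Fin (finrank K V)) K, Nonempty (Equiv σ (toRepresentation ρ)) := by
  let b := finBasis K V
  let toMatrixHom : G →* Matrix (Fin (finrank K V)) (Fin (finrank K V)) K :=
    (LinearMap.toMatrixAlgEquiv b).toMonoidHom.comp σ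
  refine ⟨toMatrixHom.toHomUnits, ⟨.mk b.equivFun fun g ↦ LinearMap.ext fun v ↦ ?_⟩⟩
  exact (LinearMap.toMatrix_mulVec_repr b b (σ g) v).symm

lemma isIrreducible_of_equiv {V W : Type*} [AddCommGroup V] [Module K V] [AddCommGroup W]
    [Module K W] {σ : Representation K G V} {τ : Representation K G W} [IsIrreducible σ]
    (e : Equiv σ τ) : IsIrreducible τ := by
  rw [irreducible_iff_isSimpleModule_asModule]
  refine IsSimpleModule.congr (.symm (.ofBijective
    (IntertwiningMap.equivLinearMapAsModule σ τ e.toIntertwiningMap) ?_))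
  exact e.bijective

lemma nontrivial_of_isIrreducible {V : Type*} [AddCommGroup V] [Module K V]
    (σ : Representation K G V) [IsIrreducible σ] :
    Nontrivial V := by
  by_contra h
  have := not_nontrivial_iff_subsingleton.1 h
  exact bot_ne_top (α := Subrepresentation σ)
    (Subrepresentation.toSubmodule_injective (Subsingleton.elim _ _))

lemma isIrreducibleRep_iff {ρ : G →* GL (Fin n) K} :
    IsIrreducibleRep ρ ↔ IsIrreducible (toRepresentation ρ) := by
  constructor
  · rintro ⟨hn, hρ⟩
    have : NeZero n := ⟨hn.ne'⟩
    refine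
      { exists_pair_ne := ⟨⊥, ⊤, fun h ↦ ?_⟩
        eq_bot_or_eq_top := fun W ↦ ?_ }
    · exact (bot_ne_top : (⊥ : Submodule K (Fin n → K)) ≠ ⊤)
        (congrArg Subrepresentation.toSubmodule h)
    · exact (hρ W.toSubmodule W.apply_mem_toSubmodule).imp
        (Subrepresentation.toSubmodule_injective ·) (Subrepresentation.toSubmodule_injective ·)
  · intro hρ
    refine ⟨Nat.pos_of_ne_zero ?_, fun W hW ↦ ?_⟩
    · rintro rfl
      exact not_nontrivial _ (nontrivial_of_isIrreducible (toRepresentation ρ))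
    · exact (hρ.eq_bot_or_eq_top ⟨W, fun g v ↦ hW g v⟩).imp
        (congrArg Subrepresentation.toSubmodule) (congrArg Subrepresentation.toSubmodule)

end MatrixRepresentations

section CompleteReducibility

variable {K G V V' : Type*} [Field K] [Group G] [AddCommGroup V] [Module K V] [AddCommGroup V']
  [Module K V']

lemma isIrreducible_toRepresentation_of_isAtom {σ : Representation K G V}
    {W : Subrepresentation σ} (hW : IsAtom W) : IsIrreducible W.toRepresentation := by
  have map_subtype_injective : Function.Injective (Submodule.map W.toSubmodule.subtype) :=
    Submodule.map_injective_of_injective W.toSubmodule.subtype_injective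
  let image (U : Subrepresentation W.toRepresentation) : Subrepresentation σ :=
    ⟨U.toSubmodule.map W.toSubmodule.subtype, by
      rintro g _ ⟨u, hu, rfl⟩
      exact ⟨W.toRepresentation g u, U.apply_mem_toSubmodule g hu, rfl⟩⟩
  have image_injective : Function.Injective image := fun U₁ U₂ h ↦
    Subrepresentation.toSubmodule_injective
      (map_subtype_injective (congrArg Subrepresentation.toSubmodule h))
  have image_bot : image ⊥ = ⊥ := Subrepresentation.toSubmodule_injective (Submodule.map_bot _)
  have image_top : image ⊤ = W :=
    Subrepresentation.toSubmodule_injective (Submodule.map_subtype_top _)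
  refine
    { exists_pair_ne := ⟨⊥, ⊤, fun h ↦ hW.1 ?_⟩
      eq_bot_or_eq_top := fun U ↦ ?_ }
  · rw [← image_bot, h, image_top]
  · have image_le : image U ≤ W := Submodule.map_subtype_le _ _
    exact (hW.le_iff.1 image_le).imp (fun h ↦ image_injective (h.trans image_bot.symm))
      (fun h ↦ image_injective (h.trans image_top.symm))

lemma exists_isIrreducible_subrepresentation [FiniteDimensional K V] [Nontrivial V]
    (σ : Representation K G V) : ∃ W : Subrepresentation σ, IsIrreducible W.toRepresentation := by
  have : WellFoundedLT (Subrepresentation σ) :=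
    StrictMono.wellFoundedLT (f := Subrepresentation.toSubmodule) fun _ _ h ↦ h
  have : IsAtomic (Subrepresentation σ) := isAtomic_of_orderBot_wellFounded_lt wellFounded_lt
  have top_ne_bot : (⊤ : Subrepresentation σ) ≠ ⊥ := fun h ↦
    (top_ne_bot : (⊤ : Submodule K V) ≠ ⊥) (congrArg Subrepresentation.toSubmodule h)
  obtain ⟨W, hW, -⟩ := (eq_bot_or_exists_atom_le (⊤ : Subrepresentation σ)).resolve_left top_ne_bot
  exact ⟨W, isIrreducible_toRepresentation_of_isAtom hW⟩

lemma character_eq_zero_of_subsingleton [Subsingleton V] (σ : Representation K G V) :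
    σ.character = 0 := by
  ext g
  simp [Representation.character, Subsingleton.elim (σ g) 0]

lemma character_prod [FiniteDimensional K V] [FiniteDimensional K V']
    (σ : Representation K G V) (τ : Representation K G V') :
    (σ.prod τ).character = σ.character + τ.character :=
  funext fun g ↦ LinearMap.trace_prodMap' (σ g) (τ g)

/-- The product of two equivalences of representations. -/
noncomputable def prodCongr {W W' : Type*} [AddCommGroup W] [Module K W] [AddCommGroup W']
    [Module K W'] {σ : Representation K G V} {σ' : Representation K G V'} {τ : Representation K G W}
    {τ' : Representation K G W'} (e : Equiv σ σ') (e' : Equiv τ τ') :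
    Equiv (σ.prod τ) (σ'.prod τ') :=
  .mk (e.toLinearEquiv.prodCongr e'.toLinearEquiv) fun g ↦ LinearMap.ext fun x ↦
    Prod.ext (e.toIntertwiningMap.isIntertwining _ _ g x.1)
      (e'.toIntertwiningMap.isIntertwining _ _ g x.2)

variable [Finite G] [NeZero (Nat.card G : K)]

lemma exists_equiv_prod_of_injective {σ : Representation K G V} {τ : Representation K G V'}
    (f : IntertwiningMap τ σ) (hf : Function.Injective f) :
    ∃ U : Subrepresentation σ, Nonempty (Equiv (τ.prod U.toRepresentation) σ) := by
  obtain ⟨U, hU⟩ := exists_isCompl f.range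
  have disjoint : Disjoint (LinearMap.range f.toLinearMap) U.toSubmodule :=
    disjoint_iff.2 (congrArg Subrepresentation.toSubmodule hU.inf_eq_bot)
  have codisjoint : LinearMap.range f.toLinearMap ⊔ U.toSubmodule = ⊤ :=
    congrArg Subrepresentation.toSubmodule hU.sup_eq_top
  let e : (V' × U.toSubmodule) →ₗ[K] V := f.toLinearMap.coprod U.toSubmodule.subtype
  have e_injective : Function.Injective e := by
    rw [← LinearMap.ker_eq_bot, LinearMap.ker_coprod_of_disjoint_range _ _ (by simpa),
      Submodule.ker_subtype, LinearMap.ker_eq_bot.2 hf, Submodule.prod_bot]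
  have e_surjective : Function.Surjective e := by
    rw [← LinearMap.range_eq_top, LinearMap.range_coprod, Submodule.range_subtype, codisjoint]
  refine ⟨U, ⟨.mk (.ofBijective e ⟨e_injective, e_surjective⟩) fun g ↦ LinearMap.ext fun x ↦ ?_⟩⟩
  change f (τ g x.1) + σ g x.2 = σ g (f x.1 + x.2)
  rw [map_add, f.isIntertwining]

lemma exists_equiv_prod_of_nontrivial [Nontrivial V] [FiniteDimensional K V]
    (σ : Representation K G V) : ∃ W U : Subrepresentation σ, IsIrreducible W.toRepresentation ∧
      Nonempty (Equiv (W.toRepresentation.prod U.toRepresentation) σ) := by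
  obtain ⟨W, hW⟩ := exists_isIrreducible_subrepresentation σ
  let f : IntertwiningMap W.toRepresentation σ := ⟨W.toSubmodule.subtype, fun _ ↦ rfl⟩
  obtain ⟨U, hU⟩ := exists_equiv_prod_of_injective f W.toSubmodule.subtype_injective
  exact ⟨W, U, hW, hU⟩

end CompleteReducibility

section CharactersDetermineRepresentations

variable {K G : Type*} [Field K] [CharZero K] [Group G] [Finite G]

lemma exists_injective_of_character_eq {U V V' : Type*} [AddCommGroup U] [Module K U]
    [FiniteDimensional K U] [AddCommGroup V] [Module K V] [FiniteDimensional K V]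
    [AddCommGroup V'] [Module K V'] [FiniteDimensional K V'] {υ : Representation K G U}
    [IsIrreducible υ] {σ : Representation K G V} {σ' : Representation K G V'}
    (hχ : σ.character = σ'.character) (f : IntertwiningMap υ σ)
    (hf : Function.Injective f) :
    ∃ f' : IntertwiningMap υ σ', Function.Injective f' := by
  cases nonempty_fintype G
  have := nontrivial_of_isIrreducible υ
  have f_ne_zero : f ≠ 0 := by
    obtain ⟨u, hu⟩ := exists_ne (0 : U)
    rintro rfl
    exact hu (hf rfl)
  have : Invertible (Nat.card G : K) := invertibleOfNonzero (NeZero.ne (Nat.card G : K))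
  have finrank_eq :
      finrank K (IntertwiningMap υ σ) = finrank K (IntertwiningMap υ σ') := by
    rw [← Nat.cast_inj (R := K), ← card_inv_mul_sum_char_mul_char_eq_finrank, hχ,
      card_inv_mul_sum_char_mul_char_eq_finrank]
  have finrank_pos : 0 < finrank K (IntertwiningMap υ σ') :=
    finrank_eq ▸ finrank_pos_iff_exists_ne_zero.2 ⟨f, f_ne_zero⟩
  obtain ⟨f', hf'⟩ := finrank_pos_iff_exists_ne_zero.1 finrank_pos
  exact ⟨f', (IsIrreducible.injective_or_eq_zero f').resolve_right hf'⟩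

theorem nonempty_equiv_of_character_eq {V V' : Type*} [AddCommGroup V] [Module K V]
    [FiniteDimensional K V] [AddCommGroup V'] [Module K V'] [FiniteDimensional K V']
    {σ : Representation K G V} {σ' : Representation K G V'} (hχ : σ.character = σ'.character) :
    Nonempty (Equiv σ σ') := by
  induction hd : finrank K V using Nat.strong_induction_on generalizing V V' with
  | _ d ih =>
  have finrank_eq : finrank K V = finrank K V' := by
    rw [← Nat.cast_inj (R := K), ← char_one σ, hχ, char_one]
  rcases subsingleton_or_nontrivial V with hV | hV
  · exact ⟨.mk (.ofFinrankEq V V' finrank_eq) fun g ↦ Subsingleton.elim _ _⟩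
  obtain ⟨W, U, hW, ⟨e⟩⟩ := exists_equiv_prod_of_nontrivial σ
  let f : IntertwiningMap W.toRepresentation σ := e.toIntertwiningMap.comp (.inl K _ _)
  obtain ⟨f', hf'⟩ := exists_injective_of_character_eq hχ f
    (e.injective.comp LinearMap.inl_injective)
  obtain ⟨U', ⟨e'⟩⟩ := exists_equiv_prod_of_injective f' hf'
  have character_eq : U.toRepresentation.character = U'.toRepresentation.character := by
    have := (char_iso e).trans (hχ.trans (char_iso e').symm)
    rwa [character_prod, character_prod, add_right_inj] at this
  have finrank_lt : finrank K U.toSubmodule < d := by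
    have := nontrivial_of_isIrreducible W.toRepresentation
    have := finrank_pos (R := K) (M := W.toSubmodule)
    rw [← hd, ← e.toLinearEquiv.finrank_eq, finrank_prod]
    lia
  obtain ⟨e''⟩ := ih _ finrank_lt character_eq rfl
  exact ⟨(e.symm.trans (prodCongr (.refl _) e'')).trans e'⟩

lemma exists_conj_of_repChar_eq {n : ℕ} {ρ ρ' : G →* GL (Fin n) K}
    (hχ : repChar ρ = repChar ρ') : ∃ M : GL (Fin n) K, ∀ g, ρ g = M * ρ' g * M⁻¹ := by
  rw [← character_toRepresentation, ← character_toRepresentation] at hχ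
  obtain ⟨e⟩ := nonempty_equiv_of_character_eq hχ.symm
  let M : GL (Fin n) K := Matrix.GeneralLinearGroup.toLin.symm
    (LinearMap.GeneralLinearGroup.ofLinearEquiv e.toLinearEquiv)
  refine ⟨M, fun g ↦ eq_mul_inv_of_mul_eq (Units.ext ?_)⟩
  have intertwines : e.toLinearEquiv ∘ₗ toRepresentation ρ' g =
      toRepresentation ρ g ∘ₗ e.toLinearEquiv :=
    (e.isIntertwining' g)
  have := congrArg LinearMap.toMatrix' intertwines
  rw [LinearMap.toMatrix'_comp, LinearMap.toMatrix'_comp, toRepresentation_apply,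
    toRepresentation_apply, LinearMap.toMatrix'_toLin', LinearMap.toMatrix'_toLin'] at this
  exact this.symm

end CharactersDetermineRepresentations

section Characters

variable {K G : Type*} [Field K] [Group G]

/-- `f` is the character of a representation over `K`. -/
def IsCharacter (f : G → K) : Prop :=
  ∃ (n : ℕ) (ρ : G →* GL (Fin n) K), repChar ρ = f

/-- `f` is the character of a representation over `K` that is irreducible over `K` (not
necessarily absolutely irreducible). -/
def IsIrreducibleCharacter (f : G → K) : Prop :=
  ∃ (n : ℕ) (ρ : G →* GL (Fin n) K), IsIrreducibleRep ρ ∧ repChar ρ = f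

/-- `f` is, after extension of scalars, the character of a representation over the smaller
field `K`. -/
def IsAffordedOver (K : Type*) {L : Type*} [Field K] [Field L] [Algebra K L] (f : G → L) : Prop :=
  ∃ f₀ : G → K, IsCharacter f₀ ∧ algebraMap K L ∘ f₀ = f

lemma IsIrreducibleCharacter.isCharacter {f : G → K} (hf : IsIrreducibleCharacter f) :
    IsCharacter f :=
  let ⟨n, ρ, _, hρ⟩ := hf
  ⟨n, ρ, hρ⟩

section Representation

variable {V : Type*} [AddCommGroup V] [Module K V] [FiniteDimensional K V]

lemma isCharacter_character (σ : Representation K G V) : IsCharacter σ.character := by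
  obtain ⟨ρ, ⟨e⟩⟩ := exists_equiv_toRepresentation σ
  exact ⟨_, ρ, by rw [char_iso e, character_toRepresentation]⟩

lemma isIrreducibleCharacter_character (σ : Representation K G V) [IsIrreducible σ] :
    IsIrreducibleCharacter σ.character := by
  obtain ⟨ρ, ⟨e⟩⟩ := exists_equiv_toRepresentation σ
  exact ⟨_, ρ, isIrreducibleRep_iff.2 (isIrreducible_of_equiv e),
    by rw [char_iso e, character_toRepresentation]⟩

lemma exists_multiset_sum_eq_character [Finite G] [NeZero (Nat.card G : K)]
    (σ : Representation K G V) :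
    ∃ s : Multiset (G → K), (∀ φ ∈ s, IsIrreducibleCharacter φ) ∧ s.sum = σ.character := by
  induction hd : finrank K V using Nat.strong_induction_on generalizing V with
  | _ d ih =>
  rcases subsingleton_or_nontrivial V with hV | hV
  · exact ⟨0, by simp, by rw [character_eq_zero_of_subsingleton, Multiset.sum_zero]⟩
  obtain ⟨W, U, hW, ⟨e⟩⟩ := exists_equiv_prod_of_nontrivial σ
  have finrank_lt : finrank K U.toSubmodule < d := by
    have := nontrivial_of_isIrreducible W.toRepresentation
    have := finrank_pos (R := K) (M := W.toSubmodule)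
    rw [← hd, ← e.toLinearEquiv.finrank_eq, finrank_prod]
    lia
  obtain ⟨s, hs, hsum⟩ := ih _ finrank_lt U.toRepresentation rfl
  refine ⟨W.toRepresentation.character ::ₘ s, ?_, ?_⟩
  · exact Multiset.forall_mem_cons.2 ⟨isIrreducibleCharacter_character _, hs⟩
  · rw [Multiset.sum_cons, hsum, ← character_prod, char_iso e]

end Representation

lemma IsCharacter.exists_multiset_sum_eq [Finite G] [NeZero (Nat.card G : K)] {f : G → K}
    (hf : IsCharacter f) :
    ∃ s : Multiset (G → K), (∀ φ ∈ s, IsIrreducibleCharacter φ) ∧ s.sum = f := by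
  obtain ⟨n, ρ, rfl⟩ := hf
  rw [← character_toRepresentation]
  exact exists_multiset_sum_eq_character _

lemma IsCharacter.zero : IsCharacter (0 : G → K) :=
  ⟨0, 1, funext fun _ ↦ Matrix.trace_fin_zero _⟩

lemma IsCharacter.add {f h : G → K} (hf : IsCharacter f) (hh : IsCharacter h) :
    IsCharacter (f + h) := by
  obtain ⟨n, ρ, rfl⟩ := hf
  obtain ⟨m, τ, rfl⟩ := hh
  rw [← character_toRepresentation, ← character_toRepresentation, ← character_prod]
  exact isCharacter_character _

lemma repChar_map {L : Type*} [Field L] (j : K →+* L) {n : ℕ} (ρ : G →* GL (Fin n) K) :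
    repChar ((Matrix.GeneralLinearGroup.map j).comp ρ) = j ∘ repChar ρ :=
  funext fun _ ↦ (AddMonoidHom.map_trace j _).symm

lemma IsCharacter.map {L : Type*} [Field L] (j : K →+* L) {f : G → K} (hf : IsCharacter f) :
    IsCharacter (j ∘ f) := by
  obtain ⟨n, ρ, rfl⟩ := hf
  exact ⟨n, _, repChar_map j ρ⟩

lemma trace_restrictScalars {F V : Type*} [Field F] [Algebra K F] [FiniteDimensional K F]
    [AddCommGroup V] [Module F V] [FiniteDimensional F V] [Module K V] [IsScalarTower K F V]
    (f : V →ₗ[F] V) :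
    LinearMap.trace K V (f.restrictScalars K) = Algebra.trace K F (LinearMap.trace F V f) := by
  let b := finBasis K F
  let c := finBasis F V
  rw [LinearMap.trace_eq_matrix_trace K (b.smulTower c), LinearMap.trace_eq_matrix_trace F c,
    Matrix.trace, Fintype.sum_prod_type_right, Matrix.trace, map_sum]
  refine Finset.sum_congr rfl fun i _ ↦ ?_
  rw [Algebra.trace_eq_matrix_trace b, Matrix.trace]
  refine Finset.sum_congr rfl fun j _ ↦ ?_
  simp [LinearMap.toMatrix_apply, Algebra.leftMulMatrix_eq_repr_mul, Basis.smulTower_repr,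
    Basis.smulTower_apply, mul_comm]

lemma IsCharacter.trace {F : Type*} [Field F] [Algebra K F] [FiniteDimensional K F] {f : G → F}
    (hf : IsCharacter f) : IsCharacter (Algebra.trace K F ∘ f) := by
  obtain ⟨n, ρ, rfl⟩ := hf
  let σ : Representation K G (Fin n → F) :=
    { toFun := fun g ↦ (toRepresentation ρ g).restrictScalars K
      map_one' := by ext; simp
      map_mul' := fun g h ↦ by ext; simp }
  have character_eq : σ.character = Algebra.trace K F ∘ repChar ρ := by
    rw [← character_toRepresentation]
    exact funext fun g ↦ trace_restrictScalars (toRepresentation ρ g)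
  exact character_eq ▸ isCharacter_character σ

variable (K G) in
lemma isCharacter_regular [Finite G] [DecidableEq G] :
    IsCharacter (Pi.single 1 (Nat.card G) : G → K) := by
  cases nonempty_fintype G
  let σ : Representation K G (G → K) :=
    { toFun := fun g ↦ LinearMap.funLeft K K (· * g)
      map_one' := by ext; simp
      map_mul' := fun g h ↦ by
        refine LinearMap.ext fun f ↦ funext fun x ↦ ?_
        simp [LinearMap.funLeft, mul_assoc] }
  have character_eq : σ.character = Pi.single 1 (Nat.card G) := by
    ext g
    rw [Representation.character, LinearMap.trace_eq_matrix_trace K (Pi.basisFun K G)]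
    simp [Matrix.trace, σ, LinearMap.funLeft, Pi.single_apply]
  exact character_eq ▸ isCharacter_character σ

variable {k : Type*} [Field k] [Algebra k K] {n : ℕ} {ρ : G →* GL (Fin n) K}
  {K₀ : IntermediateField k K}

lemma isAffordedOver_of_descends (h : Descends ρ K₀) : IsAffordedOver K₀ (repChar ρ) := by
  obtain ⟨ρ', M, hM⟩ := h
  refine ⟨repChar ρ', ⟨n, ρ', rfl⟩, ?_⟩
  rw [← repChar_map]
  ext g
  rw [repChar, repChar, hM, Units.val_mul, Matrix.trace_mul_comm, ← Units.val_mul,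
    inv_mul_cancel_left]
  rfl

theorem descends_iff_isAffordedOver [CharZero K] [Finite G] :
    Descends ρ K₀ ↔ IsAffordedOver K₀ (repChar ρ) := by
  refine ⟨isAffordedOver_of_descends, ?_⟩
  rintro ⟨_, ⟨m, ρ', rfl⟩, hρ'⟩
  rw [← repChar_map] at hρ'
  obtain rfl : m = n := by
    simpa [repChar] using congrFun hρ' 1
  obtain ⟨M, hM⟩ := exists_conj_of_repChar_eq hρ'.symm
  exact ⟨ρ', M, fun g ↦ hM g⟩

end Characters

section Pairing

variable {K G : Type*} [Field K] [Group G] [Fintype G]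

/-- The pairing `⟨f, h⟩ = |G|⁻¹ ∑ g, f g * h g⁻¹`. Inverting the argument instead of conjugating
the value makes it bilinear over any field and compatible with all field embeddings; on complex
characters it is the usual inner product. -/
noncomputable def characterPairing : LinearMap.BilinForm K (G → K) :=
  LinearMap.mk₂ K (fun f h ↦ (Nat.card G : K)⁻¹ * ∑ g, f g * h g⁻¹)
    (fun _ _ _ ↦ by simp [add_mul, Finset.sum_add_distrib, mul_add])
    (fun _ _ _ ↦ by simp [Finset.mul_sum, mul_assoc, mul_left_comm])
    (fun _ _ _ ↦ by simp [Finset.sum_add_distrib, mul_add])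
    (fun _ _ _ ↦ by simp [Finset.mul_sum, mul_left_comm])

lemma characterPairing_apply (f h : G → K) :
    characterPairing f h = (Nat.card G : K)⁻¹ * ∑ g, f g * h g⁻¹ :=
  rfl

lemma characterPairing_map {L : Type*} [Field L] (j : K →+* L) (f h : G → K) :
    characterPairing (j ∘ f) (j ∘ h) = j (characterPairing f h) := by
  simp [characterPairing_apply]

variable [CharZero K] [IsAlgClosed K]

open Classical in
lemma IsIrreducibleCharacter.characterPairing_eq {φ ψ : G → K} (hφ : IsIrreducibleCharacter φ)
    (hψ : IsIrreducibleCharacter ψ) : characterPairing φ ψ = if ψ = φ then 1 else 0 := by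
  have : Invertible (Nat.card G : K) := invertibleOfNonzero (NeZero.ne (Nat.card G : K))
  obtain ⟨n, ρ, hρ, rfl⟩ := hφ
  obtain ⟨m, τ, hτ, rfl⟩ := hψ
  rw [isIrreducibleRep_iff] at hρ hτ
  have nonempty_equiv_iff :
      Nonempty (Equiv (toRepresentation τ) (toRepresentation ρ)) ↔ repChar τ = repChar ρ := by
    rw [← character_toRepresentation, ← character_toRepresentation]
    exact ⟨fun ⟨e⟩ ↦ char_iso e, nonempty_equiv_of_character_eq⟩
  simpa only [characterPairing_apply, nonempty_equiv_iff, character_toRepresentation] using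
    char_orthonormal (toRepresentation ρ) (toRepresentation τ)

lemma IsIrreducibleCharacter.characterPairing_self {φ : G → K} (hφ : IsIrreducibleCharacter φ) :
    characterPairing φ φ = 1 := by
  classical
  rw [hφ.characterPairing_eq hφ, if_pos rfl]

lemma characterPairing_multiset_sum [DecidableEq (G → K)] {s : Multiset (G → K)}
    (hs : ∀ φ ∈ s, IsIrreducibleCharacter φ) {ψ : G → K} (hψ : IsIrreducibleCharacter ψ) :
    characterPairing s.sum ψ = s.count ψ := by
  induction s using Multiset.induction_on with
  | empty => simp
  | cons φ s ih =>
    rw [Multiset.forall_mem_cons] at hs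
    rw [Multiset.sum_cons, map_add, LinearMap.add_apply, ih hs.2, hs.1.characterPairing_eq hψ,
      Multiset.count_cons, add_comm]
    push_cast
    congr

theorem IsCharacter.isIrreducibleCharacter_of_characterPairing_self {f : G → K}
    (hf : IsCharacter f) (hnorm : characterPairing f f = 1) : IsIrreducibleCharacter f := by
  classical
  obtain ⟨s, hs, rfl⟩ := hf.exists_multiset_sum_eq
  have sum_count : (s.map s.count).sum = 1 := by
    have map_eq : s.map (characterPairing s.sum) = s.map fun φ ↦ (s.count φ : K) :=
      Multiset.map_congr rfl fun φ hφ ↦ characterPairing_multiset_sum hs (hs φ hφ)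
    rw [map_multiset_sum, map_eq] at hnorm
    rw [← Nat.cast_inj (R := K), Nat.cast_multiset_sum, Multiset.map_map]
    simpa using hnorm
  have card_le_one : s.card ≤ 1 := by
    have one_le_count : ∀ m ∈ s.map s.count, 1 ≤ m := by
      simp [Multiset.one_le_count_iff_mem]
    simpa [sum_count] using Multiset.card_nsmul_le_sum one_le_count
  have card_ne_zero : s.card ≠ 0 := by
    intro h
    simp [Multiset.card_eq_zero.1 h] at sum_count
  obtain ⟨φ, rfl⟩ := Multiset.card_eq_one.1 (by lia : s.card = 1)
  simpa using hs

end Pairing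

section AlgebraicallyClosed

lemma multiset_sum_map_comp {ι K L : Type*} [Semiring K] [Semiring L] (j : K →+* L)
    (s : Multiset (ι → K)) : (s.map (j ∘ ·)).sum = j ∘ s.sum :=
  (map_multiset_sum (j.compLeft ι) s).symm

variable {G C Ω : Type*} [Group G] [Field C] [IsAlgClosed C] [Field Ω] [CharZero Ω]

lemma IsCharacter.isIrreducibleCharacter_comp [Finite G] [IsAlgClosed Ω] {F : Type*} [Field F]
    {f : G → F} (hf : IsCharacter f) {i : F →+* C} (hi : IsIrreducibleCharacter (i ∘ f))
    (j : F →+* Ω) : IsIrreducibleCharacter (j ∘ f) := by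
  cases nonempty_fintype G
  have : CharZero F := j.charZero
  have : CharZero C := charZero_of_injective_ringHom i.injective
  have hnorm : characterPairing f f = 1 := by
    rw [← i.injective.eq_iff, ← characterPairing_map, hi.characterPairing_self, map_one]
  refine (hf.map j).isIrreducibleCharacter_of_characterPairing_self ?_
  rw [characterPairing_map, hnorm, map_one]

lemma IsIrreducibleCharacter.apply_one_ne_zero {φ : G → Ω} (hφ : IsIrreducibleCharacter φ) :
    φ 1 ≠ 0 := by
  obtain ⟨n, ρ, ⟨hn, -⟩, rfl⟩ := hφ
  simp [repChar, hn.ne']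

variable [Finite G] [IsAlgClosed Ω] [Algebra C Ω]

lemma IsIrreducibleCharacter.isAffordedOver_of_isAlgClosed {φ : G → Ω}
    (hφ : IsIrreducibleCharacter φ) : IsAffordedOver C φ := by
  classical
  cases nonempty_fintype G
  have : CharZero C := (algebraMap C Ω).charZero
  obtain ⟨s, hs, hsum⟩ := (isCharacter_regular C G).exists_multiset_sum_eq
  have irreducible_map : ∀ ψ ∈ s.map (algebraMap C Ω ∘ ·), IsIrreducibleCharacter ψ :=
    Multiset.forall_mem_map_iff.2 fun ψ hψ ↦
      (hs ψ hψ).isCharacter.isIrreducibleCharacter_comp (i := RingHom.id C) (hs ψ hψ) _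
  have sum_map : (s.map (algebraMap C Ω ∘ ·)).sum = Pi.single 1 (Nat.card G : Ω) := by
    rw [multiset_sum_map_comp, hsum]
    ext g
    simp [Pi.single_apply, apply_ite (algebraMap C Ω)]
  have count_eq : ((s.map (algebraMap C Ω ∘ ·)).count φ : Ω) = φ 1 := by
    rw [← characterPairing_multiset_sum irreducible_map hφ, sum_map, characterPairing_apply]
    simp [Pi.single_apply]
  have count_ne_zero : (s.map (algebraMap C Ω ∘ ·)).count φ ≠ 0 := by
    rw [← Nat.cast_ne_zero (R := Ω), count_eq]
    exact hφ.apply_one_ne_zero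
  obtain ⟨ψ, hψ, hψφ⟩ := Multiset.mem_map.1 (Multiset.count_ne_zero.1 count_ne_zero)
  exact ⟨ψ, (hs ψ hψ).isCharacter, hψφ⟩

theorem IsCharacter.isAffordedOver_of_isAlgClosed {f : G → Ω} (hf : IsCharacter f) :
    IsAffordedOver C f := by
  obtain ⟨s, hs, rfl⟩ := hf.exists_multiset_sum_eq
  refine Multiset.sum_induction (IsAffordedOver C) s ?_ ⟨0, .zero, ?_⟩
    fun φ hφ ↦ (hs φ hφ).isAffordedOver_of_isAlgClosed
  · rintro _ _ ⟨a, ha, rfl⟩ ⟨b, hb, rfl⟩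
    exact ⟨a + b, ha.add hb, map_add ((algebraMap C Ω).compLeft G) a b⟩
  · exact map_zero ((algebraMap C Ω).compLeft G)

end AlgebraicallyClosed

section GaloisDescent

variable {K C G : Type*} [Field K] [Field C] [Algebra K C]

/-- The conjugates `σ ∘ φ` of an `F`-valued function `φ` under the `K`-embeddings `σ` of `F`
into `C`, one for each embedding. -/
noncomputable def galoisConjugates (K C : Type*) [Field K] [Field C] [Algebra K C] {F : Type*}
    [Field F] [Algebra K F] [FiniteDimensional K F] (φ : G → F) : Multiset (G → C) :=
  (Finset.univ : Finset (F →ₐ[K] C)).val.map fun σ : F →ₐ[K] C ↦ (σ ∘ φ : G → C)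

section

variable {F : Type*} [Field F] [Algebra K F]

lemma mem_galoisConjugates [FiniteDimensional K F] {φ : G → F} {ψ : G → C} :
    ψ ∈ galoisConjugates K C φ ↔ ∃ σ : F →ₐ[K] C, σ ∘ φ = ψ := by
  simp [galoisConjugates]

lemma sum_galoisConjugates [FiniteDimensional K F] [CharZero K] [IsAlgClosed C] (φ : G → F) :
    (galoisConjugates K C φ).sum = algebraMap K C ∘ Algebra.trace K F ∘ φ := by
  ext g
  rw [Function.comp_apply, Function.comp_apply, trace_eq_sum_embeddings C, galoisConjugates]
  exact Finset.sum_apply g Finset.univ fun σ : F →ₐ[K] C ↦ (σ ∘ φ : G → C)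

variable [Group G] [Finite G] [CharZero C] [IsAlgClosed C]

lemma count_comp_algHom_eq [DecidableEq (G → C)] {s : Multiset (G → C)}
    (hs : ∀ φ ∈ s, IsIrreducibleCharacter φ) {f : G → K} (hf : algebraMap K C ∘ f = s.sum)
    {φ : G → F} (σ τ : F →ₐ[K] C) (hσ : IsIrreducibleCharacter (σ ∘ φ))
    (hτ : IsIrreducibleCharacter (τ ∘ φ)) : s.count (σ ∘ φ) = s.count (τ ∘ φ) := by
  cases nonempty_fintype G
  have map_pairing (υ : F →ₐ[K] C) (hυ : IsIrreducibleCharacter (υ ∘ φ)) :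
      υ (characterPairing (algebraMap K F ∘ f) φ) = s.count (υ ∘ φ) := by
    have comp_eq : υ ∘ algebraMap K F ∘ f = s.sum := by
      rw [← hf]
      exact funext fun g ↦ υ.commutes (f g)
    rw [← characterPairing_multiset_sum hs hυ, ← comp_eq]
    exact (characterPairing_map (υ : F →+* C) _ _).symm
  have pairing_eq : characterPairing (algebraMap K F ∘ f) φ = s.count (τ ∘ φ) := by
    refine τ.injective ?_
    exact (map_pairing τ hτ).trans (map_natCast τ _).symm
  rw [← Nat.cast_inj (R := C), ← map_pairing σ hσ, pairing_eq, map_natCast]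

end

variable [Group G] [Finite G] [CharZero C] [IsAlgClosed C]

lemma galoisConjugates_le {s : Multiset (G → C)} (hs : ∀ φ ∈ s, IsIrreducibleCharacter φ)
    {f : G → K} (hf : algebraMap K C ∘ f = s.sum) {F : IntermediateField K C}
    [FiniteDimensional K F] {φ : G → F} (hφ : IsCharacter φ) (hmem : F.val ∘ φ ∈ s)
    (hF : F = IntermediateField.adjoin K (Set.range (F.val ∘ φ))) :
    galoisConjugates K C φ ≤ s := by
  classical
  have comp_injective : Function.Injective fun σ : F →ₐ[K] C ↦ σ ∘ φ := by
    intro σ τ h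
    refine IntermediateField.algHom_ext_of_eq_adjoin _ hF ?_
    rintro _ ⟨g, rfl⟩
    exact congrFun h g
  have nodup : (galoisConjugates K C φ).Nodup := Finset.univ.nodup.map comp_injective
  refine (Multiset.le_iff_subset nodup).2 fun ψ hψ ↦ ?_
  obtain ⟨σ, rfl⟩ := mem_galoisConjugates.1 hψ
  have hσ : IsIrreducibleCharacter (σ ∘ φ) :=
    hφ.isIrreducibleCharacter_comp (i := (F.val : F →+* C)) (hs _ hmem)
      (σ : F →+* C)
  rw [← Multiset.count_ne_zero, count_comp_algHom_eq hs hf σ F.val hσ (hs _ hmem)]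
  exact Multiset.count_ne_zero.2 hmem

variable [Algebra.IsAlgebraic K C]

theorem isCharacter_of_map_eq_multiset_sum
    (hafforded : ∀ φ : G → C, IsIrreducibleCharacter φ →
      IsAffordedOver (IntermediateField.adjoin K (Set.range φ)) φ)
    {s : Multiset (G → C)} (hs : ∀ φ ∈ s, IsIrreducibleCharacter φ) {f : G → K}
    (hf : algebraMap K C ∘ f = s.sum) : IsCharacter f := by
  induction s using Multiset.strongInductionOn generalizing f with
  | ih s ih =>
  have : CharZero K := (algebraMap K C).charZero
  rcases s.empty_or_exists_mem with rfl | ⟨φ, hφ⟩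
  · have : f = 0 := funext fun g ↦ by simpa using congrFun hf g
    exact this ▸ .zero
  let F := IntermediateField.adjoin K (Set.range φ)
  have : FiniteDimensional K F := IntermediateField.finiteDimensional_adjoin fun x _ ↦
    Algebra.IsIntegral.isIntegral x
  obtain ⟨φ₀, hφ₀, hval : F.val ∘ φ₀ = φ⟩ := hafforded φ (hs φ hφ)
  obtain ⟨t, ht⟩ := Multiset.le_iff_exists_add.1
    (galoisConjugates_le hs hf hφ₀ (by rwa [hval]) (by rw [hval]))
  have galoisConjugates_ne_zero : galoisConjugates K C φ₀ ≠ 0 := fun h ↦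
    Multiset.notMem_zero φ (h ▸ mem_galoisConjugates.2 ⟨F.val, hval⟩)
  have t_lt : t < s := by
    rw [ht]
    exact lt_add_of_pos_left t (bot_lt_iff_ne_bot.2 galoisConjugates_ne_zero)
  have sum_eq : algebraMap K C ∘ (f - Algebra.trace K F ∘ φ₀) = t.sum := by
    refine (map_sub ((algebraMap K C).compLeft G) f (Algebra.trace K F ∘ φ₀)).trans ?_
    rw [sub_eq_iff_eq_add']
    refine hf.trans ?_
    rw [ht, Multiset.sum_add, sum_galoisConjugates]
    rfl
  have isCharacter_sub : IsCharacter (f - Algebra.trace K F ∘ φ₀) :=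
    ih t t_lt (fun ψ hψ ↦ hs ψ (ht ▸ Multiset.mem_add.2 (.inr hψ))) sum_eq
  have := isCharacter_sub.add (hφ₀.trace (K := K) (F := F))
  rwa [sub_add_cancel] at this

theorem IsCharacter.of_algebraMap_comp
    (hafforded : ∀ φ : G → C, IsIrreducibleCharacter φ →
      IsAffordedOver (IntermediateField.adjoin K (Set.range φ)) φ)
    {f : G → K} (hf : IsCharacter (algebraMap K C ∘ f)) : IsCharacter f := by
  obtain ⟨s, hs, hsum⟩ := hf.exists_multiset_sum_eq
  exact isCharacter_of_map_eq_multiset_sum hafforded hs hsum.symm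

end GaloisDescent

section DescentToSubfields

lemma IsAffordedOver.adjoin_of_tower {k K C G : Type*} [Field k] [Field K] [Field C] [Group G]
    [Algebra k K] [Algebra k C] [Algebra K C] [IsScalarTower k K C] {φ : G → C}
    (hφ : IsAffordedOver (IntermediateField.adjoin k (Set.range φ)) φ) :
    IsAffordedOver (IntermediateField.adjoin K (Set.range φ)) φ := by
  have adjoin_le : IntermediateField.adjoin k (Set.range φ) ≤
      (IntermediateField.adjoin K (Set.range φ)).restrictScalars k :=
    IntermediateField.adjoin_le_iff.2 (IntermediateField.subset_adjoin K _)
  obtain ⟨φ₀, hφ₀, hval⟩ := hφ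
  let inclusion : IntermediateField.adjoin k (Set.range φ) →+*
      IntermediateField.adjoin K (Set.range φ) :=
    (IntermediateField.inclusion adjoin_le).toRingHom
  exact ⟨inclusion ∘ φ₀, hφ₀.map inclusion, hval⟩

variable {G : Type*} [Group G] [Finite G]

lemma IsCharacter.algebraMap_comp_of_isAlgebraic {K L C : Type*} [Field K] [Field L] [CharZero L]
    [Field C] [IsAlgClosed C] [Algebra K L] [Algebra K C] [Algebra.IsAlgebraic K C] {f : G → K}
    (hf : IsCharacter (algebraMap K L ∘ f)) : IsCharacter (algebraMap K C ∘ f) := by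
  let Ω := AlgebraicClosure L
  let ι : C →ₐ[K] Ω := IsAlgClosed.lift
  let : Algebra C Ω := ι.toAlgebra
  have : IsScalarTower K C Ω := .of_algHom ι
  obtain ⟨f₀, hf₀, hmap⟩ :=
    (hf.map (algebraMap L Ω)).isAffordedOver_of_isAlgClosed (C := C)
  have : f₀ = algebraMap K C ∘ f := funext fun g ↦ (algebraMap C Ω).injective <| by
    rw [← Function.comp_apply (f := algebraMap C Ω), hmap]
    simp [← IsScalarTower.algebraMap_apply]
  exact this ▸ hf₀

variable {k : Type*} [Field k]

lemma IsCharacter.isIntegral_apply {L : Type*} [Field L] [CharZero L] [Algebra k L] {f : G → L}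
    (hf : IsCharacter f) (g : G) : IsIntegral k (f g) := by
  let ι : AlgebraicClosure k →ₐ[k] AlgebraicClosure L := IsAlgClosed.lift
  let : Algebra (AlgebraicClosure k) (AlgebraicClosure L) := ι.toAlgebra
  obtain ⟨f₀, -, hmap⟩ :=
    (hf.map (algebraMap L (AlgebraicClosure L))).isAffordedOver_of_isAlgClosed
      (C := AlgebraicClosure k)
  rw [← isIntegral_algebraMap_iff (algebraMap L (AlgebraicClosure L)).injective]
  have : IsIntegral k (ι (f₀ g)) := (Algebra.IsIntegral.isIntegral (f₀ g)).map ι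
  rwa [show ι (f₀ g) = algebraMap L _ (f g) from congrFun hmap g] at this

theorem IsCharacter.of_algebraMap_comp_of_isAlgebraic {K L : Type*} [Field K] [Field L]
    [CharZero L] [Algebra k K] [Algebra.IsAlgebraic k K] [Algebra K L]
    (hafforded : ∀ φ : G → AlgebraicClosure k, IsIrreducibleCharacter φ →
      IsAffordedOver (IntermediateField.adjoin k (Set.range φ)) φ)
    {f : G → K} (hf : IsCharacter (algebraMap K L ∘ f)) : IsCharacter f := by
  let ι : K →ₐ[k] AlgebraicClosure k := IsAlgClosed.lift
  let : Algebra K (AlgebraicClosure k) := ι.toAlgebra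
  have : IsScalarTower k K (AlgebraicClosure k) := .of_algHom ι
  have : Algebra.IsAlgebraic K (AlgebraicClosure k) := .tower_top (K := k) K
  have : CharZero K := (algebraMap K L).charZero
  have : CharZero (AlgebraicClosure k) := 
    charZero_of_injective_algebraMap (algebraMap K _).injective
  exact .of_algebraMap_comp (fun φ hφ ↦ (hafforded φ hφ).adjoin_of_tower)
    hf.algebraMap_comp_of_isAlgebraic

end DescentToSubfields

end CharacterDescent

/-- Let `k` be a field of characteristic `0` with algebraic closure `k̄` and `G` a finite
group.  Assume every irreducible representation `λ` of `G` over `k̄` can be realized over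
the field `k(χ_λ)` generated over `k` by the values of its character (i.e. all Schur
indices are `1`).  Then every representation `ρ` of `G` over any extension `L/k`, with
character `χ`, descends to `k(χ)`, which is algebraic over `k`; in particular
`ed(ρ) = 0`. -/
theorem ed_zero_of_schur_indices_one {k : Type*} [Field k] [CharZero k]
    {G : Type*} [Group G] [Finite G]
    (hschur : ∀ (m : ℕ) (lam : G →* GL (Fin m) (AlgebraicClosure k)),
      IsIrreducibleRep lam →
        Descends lam (IntermediateField.adjoin k (Set.range (repChar lam))))
    (L : Type*) [Field L] [Algebra k L] (n : ℕ) (ρ : G →* GL (Fin n) L) :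
    Descends ρ (IntermediateField.adjoin k (Set.range (repChar ρ))) ∧
    Algebra.IsAlgebraic k (IntermediateField.adjoin k (Set.range (repChar ρ))) := by
  have : CharZero L := charZero_of_injective_algebraMap (algebraMap k L).injective
  let K := IntermediateField.adjoin k (Set.range (repChar ρ))
  have isAlgebraic : Algebra.IsAlgebraic k K := IntermediateField.isAlgebraic_adjoin <|
    Set.forall_mem_range.2 <| CharacterDescent.IsCharacter.isIntegral_apply ⟨n, ρ, rfl⟩
  have afforded_of_isIrreducible : ∀ φ : G → AlgebraicClosure k,
      CharacterDescent.IsIrreducibleCharacter φ →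
        CharacterDescent.IsAffordedOver (IntermediateField.adjoin k (Set.range φ)) φ := by
    rintro _ ⟨m, lam, hlam, rfl⟩
    exact CharacterDescent.isAffordedOver_of_descends (hschur m lam hlam)
  let χ (g : G) : K := ⟨repChar ρ g, IntermediateField.subset_adjoin k _ ⟨g, rfl⟩⟩
  have isCharacter_χ : CharacterDescent.IsCharacter χ :=
    .of_algebraMap_comp_of_isAlgebraic (L := L) afforded_of_isIrreducible ⟨n, ρ, rfl⟩
  exact ⟨CharacterDescent.descends_iff_isAffordedOver.2 ⟨χ, isCharacter_χ, rfl⟩, isAlgebraic⟩
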